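/- arXiv:1901.01872 — 2 statements merged into one kernel-verified Lean document; each statement's English description precedes it below -/
import Mathlib

section
/- Suppose each f_i'' is L-Lipschitz and 0 < ε < min{1/2, 2π(λ/Λ)²}. Let x̄ ∈ ℝⁿ, let j be any index, and let x = x̄^(j) be one asynchronous update of x̄. Then the expected weighted error after one further update of x satisfies Σᵢ pᵢ ‖D(x)^{1/2}(x^(i) − x*)‖ ≤ [( (2(1−δ)+αM)^{1/2} αLεΛ )/( 2π(2(1−Δ)+αm) )] · ‖D(x̄)^{1/2}(x − x*)‖² + C₁ (1 + C₂‖g(x̄)‖^{1/2}) ‖D(x̄)^{1/2}(x − x*)‖, where C₁ = (1 + ε·max{ε/π − 2, ε(1−ρ²)²/π − 2(1−ρ²)})^{1/2} and C₂ = (εαLΛ/(π(2(1−Δ)+αm)))^{1/2}. -/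
open Matrix BigOperators

noncomputable section

/-- Second derivative of the `i`-th local objective. -/
def d2 {n : ℕ} (f : Fin n → ℝ → ℝ) (i : Fin n) (s : ℝ) : ℝ := deriv (deriv (f i)) s

/-- The diagonal matrix `G(x)` with `G(x)_ii = f_i''(x_i)`. -/
def Gmat {n : ℕ} (f : Fin n → ℝ → ℝ) (x : Fin n → ℝ) : Matrix (Fin n) (Fin n) ℝ :=
  Matrix.diagonal (fun i => d2 f i (x i))

/-- The Hessian `H(x) = I − W + αG(x)` of the penalized objective. -/
def Hmat {n : ℕ} (W : Matrix (Fin n) (Fin n) ℝ) (f : Fin n → ℝ → ℝ) (α : ℝ)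
    (x : Fin n → ℝ) : Matrix (Fin n) (Fin n) ℝ :=
  1 - W + α • Gmat f x

/-- `B = I − 2W_d + W`. -/
def Bmat {n : ℕ} (W : Matrix (Fin n) (Fin n) ℝ) : Matrix (Fin n) (Fin n) ℝ :=
  1 - (2 : ℝ) • Matrix.diagonal (fun i => W i i) + W

/-- Diagonal entries of the splitting matrix `D(x) = αG(x) + 2(I − W_d)`. -/
def dEntry {n : ℕ} (W : Matrix (Fin n) (Fin n) ℝ) (f : Fin n → ℝ → ℝ) (α : ℝ)
    (x : Fin n → ℝ) (i : Fin n) : ℝ :=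
  α * d2 f i (x i) + 2 * (1 - W i i)

/-- `D(x) = αG(x) + 2(I − W_d)`. -/
def Dmat {n : ℕ} (W : Matrix (Fin n) (Fin n) ℝ) (f : Fin n → ℝ → ℝ) (α : ℝ)
    (x : Fin n → ℝ) : Matrix (Fin n) (Fin n) ℝ :=
  Matrix.diagonal (dEntry W f α x)

/-- `D(x)^{1/2}`. -/
def Dhalf {n : ℕ} (W : Matrix (Fin n) (Fin n) ℝ) (f : Fin n → ℝ → ℝ) (α : ℝ)
    (x : Fin n → ℝ) : Matrix (Fin n) (Fin n) ℝ :=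
  Matrix.diagonal (fun i => Real.sqrt (dEntry W f α x i))

/-- `D(x)^{-1/2}`. -/
def Dinvhalf {n : ℕ} (W : Matrix (Fin n) (Fin n) ℝ) (f : Fin n → ℝ → ℝ) (α : ℝ)
    (x : Fin n → ℝ) : Matrix (Fin n) (Fin n) ℝ :=
  Matrix.diagonal (fun i => (Real.sqrt (dEntry W f α x i))⁻¹)

/-- The approximate Hessian inverse
`Ĥ(x)⁻¹ = D(x)^{-1/2}(I + D(x)^{-1/2} B D(x)^{-1/2}) D(x)^{-1/2}`. -/
def Hhatinv {n : ℕ} (W : Matrix (Fin n) (Fin n) ℝ) (f : Fin n → ℝ → ℝ) (α : ℝ)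
    (x : Fin n → ℝ) : Matrix (Fin n) (Fin n) ℝ :=
  Dinvhalf W f α x * (1 + Dinvhalf W f α x * Bmat W * Dinvhalf W f α x) * Dinvhalf W f α x

/-- The penalized objective `F(x) = (1/2) xᵀ(I−W)x + α Σᵢ f_i(x_i)`. -/
def Fobj {n : ℕ} (W : Matrix (Fin n) (Fin n) ℝ) (f : Fin n → ℝ → ℝ) (α : ℝ)
    (x : Fin n → ℝ) : ℝ :=
  (1 / 2) * (x ⬝ᵥ ((1 - W).mulVec x)) + α * ∑ i, f i (x i)

/-- The gradient `g(x) = (I − W)x + α (f_i'(x_i))_i` of the penalized objective. -/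
def gvec {n : ℕ} (W : Matrix (Fin n) (Fin n) ℝ) (f : Fin n → ℝ → ℝ) (α : ℝ)
    (x : Fin n → ℝ) : Fin n → ℝ :=
  fun i => ((1 - W).mulVec x) i + α * deriv (f i) (x i)

/-- The asynchronous update `x^(i)`: agent `i` moves along the approximate Newton
direction with stepsize `ε / p i`; other coordinates are unchanged. -/
def upd {n : ℕ} (W : Matrix (Fin n) (Fin n) ℝ) (f : Fin n → ℝ → ℝ) (α : ℝ)
    (p : Fin n → ℝ) (ε : ℝ) (x : Fin n → ℝ) (i : Fin n) : Fin n → ℝ :=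
  Function.update x i (x i - (ε / p i) * ((Hhatinv W f α x).mulVec (gvec W f α x)) i)

/-- Euclidean norm on `ℝⁿ`. -/
def euclNorm {n : ℕ} (v : Fin n → ℝ) : ℝ := Real.sqrt (∑ i, v i ^ 2)

/-!
Put `S = D(x)^{-1/2} B D(x)^{-1/2}`. Then `D(x)^{-1/2} H(x) = (1 - S) D(x)^{1/2}` and
`D(x)^{1/2} Ĥ(x)⁻¹ = (1 + S) D(x)^{-1/2}`, so in the coordinates `y = D(x)^{1/2} (x - x*)` the
approximate Newton direction is `(1 - S²) y` plus `(1 + S) D(x)^{-1/2}` times the Taylor remainder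
of the gradient, which is quadratic in `x - x*`. Without that remainder, the mean square error
after updating one random coordinate is at most an affine function of `‖S y‖²`. Since `S` is
symmetric with norm at most `ρ` (Schur test with weights `√D(x)ᵢᵢ`), the endpoints of
`[0, ρ² ‖y‖²]` give the two terms of the maximum in `C₁`. The Lipschitz bound on `f_i''` controls
`D(x)` by `D(x̄)`, which costs the factor `1 + C₂ ‖g(x̄)‖^{1/2}`.
-/

section SchurTest

open scoped Matrix.Norms.L2Operator

variable {𝕜 ι κ : Type*} [RCLike 𝕜] [Fintype κ]

theorem norm_mulVec_apply_sq_le (A : Matrix ι κ 𝕜) {v : κ → ℝ} (hv : ∀ j, 0 < v j) {i : ι}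
    {c : ℝ} (hrow : ∑ j, ‖A i j‖ * v j ≤ c) (x : κ → 𝕜) :
    ‖(A *ᵥ x) i‖ ^ 2 ≤ c * ∑ j, ‖A i j‖ * (‖x j‖ ^ 2 / v j) := by
  have term_nonneg (j : κ) : 0 ≤ ‖A i j‖ * (‖x j‖ ^ 2 / v j) :=
    mul_nonneg (norm_nonneg _) (div_nonneg (sq_nonneg _) (hv j).le)
  calc ‖(A *ᵥ x) i‖ ^ 2 ≤ (∑ j, ‖A i j‖ * ‖x j‖) ^ 2 := by
        gcongr
        exact (norm_sum_le _ _).trans_eq (Finset.sum_congr rfl fun j _ => norm_mul _ _)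
    _ ≤ (∑ j, ‖A i j‖ * v j) * ∑ j, ‖A i j‖ * (‖x j‖ ^ 2 / v j) :=
        Finset.sum_sq_le_sum_mul_sum_of_sq_le_mul _
          (fun j _ => mul_nonneg (norm_nonneg _) (hv j).le) (fun j _ => term_nonneg j)
          (fun j _ => by have := (hv j).ne'; field_simp; rfl)
    _ ≤ c * ∑ j, ‖A i j‖ * (‖x j‖ ^ 2 / v j) :=
        mul_le_mul_of_nonneg_right hrow (Finset.sum_nonneg fun j _ => term_nonneg j)

theorem l2_opNorm_le_of_schur_test [Fintype ι] [DecidableEq κ] (A : Matrix ι κ 𝕜) {u : ι → ℝ}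
    {v : κ → ℝ} {a b : ℝ} (hv : ∀ j, 0 < v j) (ha : 0 ≤ a)
    (hrow : ∀ i, ∑ j, ‖A i j‖ * v j ≤ a * u i) (hcol : ∀ j, ∑ i, ‖A i j‖ * u i ≤ b * v j) :
    ‖A‖ ≤ √(a * b) := by
  have norm_sq (x : EuclideanSpace 𝕜 κ) : ∑ i, ‖(A *ᵥ x) i‖ ^ 2 ≤ a * b * ‖x‖ ^ 2 :=
    calc ∑ i, ‖(A *ᵥ x) i‖ ^ 2 ≤ ∑ i, a * u i * ∑ j, ‖A i j‖ * (‖x j‖ ^ 2 / v j) :=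
          Finset.sum_le_sum fun i _ => norm_mulVec_apply_sq_le A hv (hrow i) x
      _ = a * ∑ j, (∑ i, ‖A i j‖ * u i) * (‖x j‖ ^ 2 / v j) := by
          simp only [Finset.mul_sum, Finset.sum_mul]
          rw [Finset.sum_comm]
          exact Finset.sum_congr rfl fun j _ => Finset.sum_congr rfl fun i _ => by ring
      _ ≤ a * ∑ j, (b * v j) * (‖x j‖ ^ 2 / v j) :=
          mul_le_mul_of_nonneg_left (Finset.sum_le_sum fun j _ =>
            mul_le_mul_of_nonneg_right (hcol j) (div_nonneg (sq_nonneg _) (hv j).le)) ha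
      _ = a * b * ‖x‖ ^ 2 := by
          rw [EuclideanSpace.norm_sq_eq, mul_assoc, Finset.mul_sum (a := b)]
          congr! 2 with j
          have := (hv j).ne'
          field_simp
  rw [l2_opNorm_def]
  refine ContinuousLinearMap.opNorm_le_bound _ (Real.sqrt_nonneg _) fun x => ?_
  rw [← Real.sqrt_sq (norm_nonneg x), ← Real.sqrt_mul' _ (sq_nonneg _), EuclideanSpace.norm_eq]
  exact Real.sqrt_le_sqrt (norm_sq x)

end SchurTest

theorem norm_sub_sub_le_of_fderiv_lipschitz {E F : Type*} [NormedAddCommGroup E]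
    [NormedSpace ℝ E] [NormedAddCommGroup F] [NormedSpace ℝ F] {h : E → F} {h' : E → E →L[ℝ] F}
    (hh : ∀ z, HasFDerivAt h (h' z) z) {L : ℝ} {x : E} (hL : ∀ z, ‖h' z - h' x‖ ≤ L * ‖z - x‖)
    (y : E) : ‖h y - h x - h' x (y - x)‖ ≤ L / 2 * ‖y - x‖ ^ 2 := by
  have deriv_remainder (t : ℝ) :
      HasDerivAt (fun t : ℝ => h (x + t • (y - x)) - h x - t • h' x (y - x))
        ((h' (x + t • (y - x)) - h' x) (y - x)) t := by
    have line : HasDerivAt (fun t : ℝ => x + t • (y - x)) (y - x) t := by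
      simpa using ((hasDerivAt_id t).smul_const (y - x)).const_add x
    simpa using (((hh _).comp_hasDerivAt t line).sub_const (h x)).fun_sub
      ((hasDerivAt_id t).smul_const (h' x (y - x)))
  have deriv_bound (t : ℝ) :
      HasDerivAt (fun t : ℝ => L / 2 * ‖y - x‖ ^ 2 * t ^ 2) (L * ‖y - x‖ ^ 2 * t) t :=
    ((hasDerivAt_pow 2 t).const_mul _).congr_deriv (by push_cast; ring)
  have fenced := image_norm_le_of_norm_deriv_right_le_deriv_boundary (a := 0) (b := 1)
    (fun t _ => (deriv_remainder t).continuousAt.continuousWithinAt)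
    (fun t _ => (deriv_remainder t).hasDerivWithinAt) (by simp) deriv_bound
    (fun t ht => calc
      _ ≤ ‖h' (x + t • (y - x)) - h' x‖ * ‖y - x‖ := ContinuousLinearMap.le_opNorm _ _
      _ ≤ L * ‖x + t • (y - x) - x‖ * ‖y - x‖ := by gcongr; exact hL _
      _ = L * ‖y - x‖ ^ 2 * t := by
          rw [add_sub_cancel_left, norm_smul, Real.norm_of_nonneg ht.1]; ring)
    (Set.right_mem_Icc.2 zero_le_one)
  simpa using fenced

theorem abs_sub_sub_le_of_deriv_lipschitz {h : ℝ → ℝ} (hh : Differentiable ℝ h) {L x : ℝ}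
    (hL : ∀ z, |deriv h z - deriv h x| ≤ L * |z - x|) (y : ℝ) :
    |h y - h x - deriv h x * (y - x)| ≤ L / 2 * (y - x) ^ 2 := by
  have fderiv_lipschitz (z : ℝ) : ‖ContinuousLinearMap.toSpanSingleton ℝ (deriv h z) -
      ContinuousLinearMap.toSpanSingleton ℝ (deriv h x)‖ ≤ L * ‖z - x‖ := by
    have sub_eq : ContinuousLinearMap.toSpanSingleton ℝ (deriv h z) -
        ContinuousLinearMap.toSpanSingleton ℝ (deriv h x) =
          ContinuousLinearMap.toSpanSingleton ℝ (deriv h z - deriv h x) := by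
      ext; simp
    rw [sub_eq, ContinuousLinearMap.norm_toSpanSingleton]
    exact hL z
  simpa [mul_comm] using norm_sub_sub_le_of_fderiv_lipschitz
    (fun z => (hh z).hasDerivAt.hasFDerivAt) fderiv_lipschitz y

theorem hasDerivAt_dotProduct_mulVec_self_line {𝕜 ι : Type*} [NontriviallyNormedField 𝕜]
    [Fintype ι] {A : Matrix ι ι 𝕜} (hA : A.IsSymm) (x v : ι → 𝕜) :
    HasDerivAt (fun t : 𝕜 => (x + t • v) ⬝ᵥ (A *ᵥ (x + t • v))) (2 * ((A *ᵥ x) ⬝ᵥ v)) 0 := by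
  have expand (t : 𝕜) : (x + t • v) ⬝ᵥ (A *ᵥ (x + t • v)) =
      x ⬝ᵥ (A *ᵥ x) + t * (2 * ((A *ᵥ x) ⬝ᵥ v)) + t ^ 2 * (v ⬝ᵥ (A *ᵥ v)) := by
    have cross : x ⬝ᵥ (A *ᵥ v) = (A *ᵥ x) ⬝ᵥ v := by
      rw [dotProduct_mulVec, ← mulVec_transpose, hA]
    simp only [mulVec_add, mulVec_smul, add_dotProduct, dotProduct_add, smul_dotProduct,
      dotProduct_smul, smul_eq_mul, cross, dotProduct_comm v (A *ᵥ x)]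
    ring
  simp only [expand]
  exact ((((hasDerivAt_id _).mul_const _).const_add _).add
    (((hasDerivAt_id _).pow 2).mul_const _)).congr_deriv (by simp)

section Contraction

open scoped RealInnerProductSpace

theorem norm_sq_sub_inner_add_norm_sq_le {E : Type*} [NormedAddCommGroup E]
    [InnerProductSpace ℝ E] {T : E →ₗ[ℝ] E} (hT : T.IsSymmetric) {ρ : ℝ}
    (hρ : ∀ v, ‖T v‖ ≤ ρ * ‖v‖) (ε : ℝ) {k : ℝ} (hk : 0 ≤ k) (y : E) :
    ‖y‖ ^ 2 - 2 * ε * ⟪y, y - T (T y)⟫ + k * ‖y - T (T y)‖ ^ 2 ≤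
      (1 + max (k - 2 * ε) (k * (1 - ρ ^ 2) ^ 2 - 2 * ε * (1 - ρ ^ 2))) * ‖y‖ ^ 2 := by
  have inner_TT : ⟪y, T (T y)⟫ = ‖T y‖ ^ 2 := by
    rw [← hT, real_inner_self_eq_norm_sq]
  have norm_T_sq (v : E) : ‖T v‖ ^ 2 ≤ ρ ^ 2 * ‖v‖ ^ 2 := by
    rw [← mul_pow]
    exact pow_le_pow_left₀ (norm_nonneg _) (hρ v) 2
  have affine_bound : ‖y‖ ^ 2 - 2 * ε * ⟪y, y - T (T y)⟫ + k * ‖y - T (T y)‖ ^ 2 ≤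
      (1 + (k - 2 * ε)) * ‖y‖ ^ 2 + (2 * ε - 2 * k + k * ρ ^ 2) * ‖T y‖ ^ 2 := by
    rw [norm_sub_sq_real, inner_sub_right, inner_TT, real_inner_self_eq_norm_sq]
    linarith [mul_le_mul_of_nonneg_left (norm_T_sq (T y)) hk]
  refine affine_bound.trans ?_
  -- An affine function of `‖T y‖ ^ 2 ∈ [0, ρ ^ 2 * ‖y‖ ^ 2]` is largest at an endpoint.
  rcases le_total (2 * ε - 2 * k + k * ρ ^ 2) 0 with slope_nonpos | slope_nonneg
  · calc _ ≤ (1 + (k - 2 * ε)) * ‖y‖ ^ 2 :=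
          add_le_of_nonpos_right (mul_nonpos_of_nonpos_of_nonneg slope_nonpos (sq_nonneg _))
      _ ≤ _ := by gcongr; exact le_max_left _ _
  · calc _ ≤ (1 + (k - 2 * ε)) * ‖y‖ ^ 2
            + (2 * ε - 2 * k + k * ρ ^ 2) * (ρ ^ 2 * ‖y‖ ^ 2) := by
          gcongr; exact norm_T_sq y
      _ = (1 + (k * (1 - ρ ^ 2) ^ 2 - 2 * ε * (1 - ρ ^ 2))) * ‖y‖ ^ 2 := by ring
      _ ≤ _ := by gcongr; exact le_max_right _ _

variable {ι : Type*} [Fintype ι] [DecidableEq ι] {p : ι → ℝ} {pmin ε : ℝ}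

theorem sum_mul_norm_sub_single_sq (hp : ∀ i, p i ≠ 0) (hpsum : ∑ i, p i = 1) (ε : ℝ)
    (y z : EuclideanSpace ℝ ι) :
    ∑ i, p i * ‖y - EuclideanSpace.single i (ε / p i * z i)‖ ^ 2 =
      ‖y‖ ^ 2 - 2 * ε * ⟪y, z⟫ + ∑ i, ε ^ 2 / p i * z i ^ 2 := by
  have term (i : ι) : p i * ‖y - EuclideanSpace.single i (ε / p i * z i)‖ ^ 2 =
      p i * ‖y‖ ^ 2 - 2 * ε * (z i * y i) + ε ^ 2 / p i * z i ^ 2 := by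
    rw [norm_sub_sq_real, EuclideanSpace.inner_single_right, PiLp.norm_single,
      Real.norm_eq_abs, sq_abs]
    have := hp i
    simp only [conj_trivial]
    field_simp
  simp only [term, Finset.sum_add_distrib, Finset.sum_sub_distrib, ← Finset.sum_mul,
    ← Finset.mul_sum, hpsum, one_mul]
  rfl

theorem sum_mul_norm_sub_single_le {T : EuclideanSpace ℝ ι →ₗ[ℝ] EuclideanSpace ℝ ι}
    (hT : T.IsSymmetric) {ρ : ℝ} (hρ : ∀ v, ‖T v‖ ≤ ρ * ‖v‖) (hpmin : 0 < pmin)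
    (hp : ∀ i, pmin ≤ p i) (hpsum : ∑ i, p i = 1) (hε : 0 ≤ ε) (y : EuclideanSpace ℝ ι) :
    ∑ i, p i * ‖y - EuclideanSpace.single i (ε / p i * (y - T (T y)) i)‖ ≤
      √(1 + ε * max (ε / pmin - 2) (ε * (1 - ρ ^ 2) ^ 2 / pmin - 2 * (1 - ρ ^ 2))) * ‖y‖ := by
  have hp0 (i : ι) : 0 < p i := hpmin.trans_le (hp i)
  rw [← Real.sqrt_sq (norm_nonneg y), ← Real.sqrt_mul' _ (sq_nonneg _)]
  refine Real.le_sqrt_of_sq_le ?_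
  set z := y - T (T y)
  calc (∑ i, p i * ‖y - EuclideanSpace.single i (ε / p i * z i)‖) ^ 2
      ≤ ∑ i, p i * ‖y - EuclideanSpace.single i (ε / p i * z i)‖ ^ 2 :=
        Real.pow_arith_mean_le_arith_mean_pow _ _ _ (fun i _ => (hp0 i).le) hpsum
          (fun i _ => norm_nonneg _) 2
    _ = ‖y‖ ^ 2 - 2 * ε * ⟪y, z⟫ + ∑ i, ε ^ 2 / p i * z i ^ 2 :=
        sum_mul_norm_sub_single_sq (fun i => (hp0 i).ne') hpsum ε y z
    _ ≤ ‖y‖ ^ 2 - 2 * ε * ⟪y, z⟫ + ε ^ 2 / pmin * ‖z‖ ^ 2 := by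
        rw [EuclideanSpace.real_norm_sq_eq z, Finset.mul_sum]
        gcongr with i
        exact hp i
    _ ≤ (1 + max (ε ^ 2 / pmin - 2 * ε)
          (ε ^ 2 / pmin * (1 - ρ ^ 2) ^ 2 - 2 * ε * (1 - ρ ^ 2))) * ‖y‖ ^ 2 :=
        norm_sq_sub_inner_add_norm_sq_le hT hρ ε (by positivity) y
    _ = _ := by
        rw [mul_max_of_nonneg _ _ hε]
        ring_nf

theorem sum_mul_norm_single_le (hpmin : 0 < pmin) (hp : ∀ i, pmin ≤ p i)
    (hpsum : ∑ i, p i = 1) (hε : 0 ≤ ε) (w : EuclideanSpace ℝ ι) :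
    ∑ i, p i * ‖EuclideanSpace.single i (ε / p i * w i)‖ ≤ ε / pmin * ‖w‖ := by
  have hp0 (i : ι) : 0 < p i := hpmin.trans_le (hp i)
  have term (i : ι) : ‖EuclideanSpace.single i (ε / p i * w i)‖ ≤ ε / pmin * ‖w‖ := by
    rw [PiLp.norm_single, norm_mul, Real.norm_of_nonneg (div_nonneg hε (hp0 i).le)]
    gcongr
    exacts [hp i, PiLp.norm_apply_le w i]
  calc _ ≤ ∑ i, p i * (ε / pmin * ‖w‖) :=
        Finset.sum_le_sum fun i _ => mul_le_mul_of_nonneg_left (term i) (hp0 i).le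
    _ = ε / pmin * ‖w‖ := by rw [← Finset.sum_mul, hpsum, one_mul]

theorem sum_mul_norm_sub_single_add_le
    {T : EuclideanSpace ℝ ι →ₗ[ℝ] EuclideanSpace ℝ ι} (hT : T.IsSymmetric) {ρ : ℝ}
    (hρ : ∀ v, ‖T v‖ ≤ ρ * ‖v‖) (hpmin : 0 < pmin) (hp : ∀ i, pmin ≤ p i)
    (hpsum : ∑ i, p i = 1) (hε : 0 ≤ ε) (y w : EuclideanSpace ℝ ι) :
    ∑ i, p i * ‖y - EuclideanSpace.single i (ε / p i * (y - T (T y) + w) i)‖ ≤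
      √(1 + ε * max (ε / pmin - 2) (ε * (1 - ρ ^ 2) ^ 2 / pmin - 2 * (1 - ρ ^ 2))) * ‖y‖
        + ε / pmin * ‖w‖ := by
  refine le_trans ?_ (add_le_add (sum_mul_norm_sub_single_le hT hρ hpmin hp hpsum hε y)
    (sum_mul_norm_single_le hpmin hp hpsum hε w))
  rw [← Finset.sum_add_distrib]
  refine Finset.sum_le_sum fun i _ => ?_
  have split : y - EuclideanSpace.single i (ε / p i * (y - T (T y) + w) i) =
      y - EuclideanSpace.single i (ε / p i * (y - T (T y)) i)
        - EuclideanSpace.single i (ε / p i * w i) := by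
    rw [PiLp.add_apply, mul_add, sub_sub]
    exact congrArg (y - ·) (PiLp.single_add 2 i)
  rw [split, ← mul_add]
  exact mul_le_mul_of_nonneg_left (norm_sub_le _ _) (hpmin.le.trans (hp i))

end Contraction

section EuclNorm

open scoped Matrix.Norms.L2Operator

variable {n : ℕ}

theorem euclNorm_eq_norm (v : Fin n → ℝ) : euclNorm v = ‖WithLp.toLp 2 v‖ := by
  simp [euclNorm, EuclideanSpace.norm_eq]

theorem euclNorm_nonneg (v : Fin n → ℝ) : 0 ≤ euclNorm v := Real.sqrt_nonneg _

theorem abs_apply_le_euclNorm (v : Fin n → ℝ) (i : Fin n) : |v i| ≤ euclNorm v := by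
  rw [euclNorm_eq_norm]
  exact PiLp.norm_apply_le (WithLp.toLp 2 v) i

theorem euclNorm_le_mul_of_abs_le {v w : Fin n → ℝ} {c : ℝ} (hc : 0 ≤ c)
    (h : ∀ i, |v i| ≤ c * |w i|) : euclNorm v ≤ c * euclNorm w := by
  have sq_le (i : Fin n) : v i ^ 2 ≤ c ^ 2 * w i ^ 2 := by
    rw [← mul_pow]
    exact sq_le_sq.2 (by rw [abs_mul, abs_of_nonneg hc]; exact h i)
  rw [euclNorm, euclNorm, ← Real.sqrt_sq hc, ← Real.sqrt_mul (sq_nonneg c), Finset.mul_sum]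
  exact Real.sqrt_le_sqrt (Finset.sum_le_sum fun i _ => sq_le i)

theorem euclNorm_mulVec_le (A : Matrix (Fin n) (Fin n) ℝ) (v : Fin n → ℝ) :
    euclNorm (A *ᵥ v) ≤ ‖A‖ * euclNorm v := by
  simp only [euclNorm_eq_norm]
  exact l2_opNorm_mulVec A (WithLp.toLp 2 v)

end EuclNorm

section FirstOrder

variable {n : ℕ} {W : Matrix (Fin n) (Fin n) ℝ} {f : Fin n → ℝ → ℝ} {α : ℝ}

theorem hasDerivAt_Fobj_line (hW : W.IsSymm) {x : Fin n → ℝ}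
    (hf : ∀ i, DifferentiableAt ℝ (f i) (x i)) (v : Fin n → ℝ) :
    HasDerivAt (fun t : ℝ => Fobj W f α (x + t • v)) (gvec W f α x ⬝ᵥ v) 0 := by
  have local_part : HasDerivAt (fun t : ℝ => ∑ i, f i ((x + t • v) i))
      (∑ i, deriv (f i) (x i) * v i) 0 := by
    refine HasDerivAt.fun_sum fun i _ => ?_
    have line : HasDerivAt (fun t : ℝ => (x + t • v) i) (v i) 0 := by
      simpa using ((hasDerivAt_id (0 : ℝ)).mul_const (v i)).const_add (x i)
    exact HasDerivAt.comp (0 : ℝ) (by simpa using (hf i).hasDerivAt) line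
  have symm_one_sub : (1 - W).IsSymm := isSymm_one.sub hW
  refine (((hasDerivAt_dotProduct_mulVec_self_line symm_one_sub x v).const_mul (1 / 2)).add
    (local_part.const_mul α)).congr_deriv ?_
  rw [one_div, inv_mul_cancel_left₀ two_ne_zero]
  simp only [gvec, dotProduct, add_mul, Finset.sum_add_distrib, Finset.mul_sum, mul_assoc]

theorem gvec_eq_zero_of_forall_Fobj_le (hW : W.IsSymm) {x : Fin n → ℝ}
    (hf : ∀ i, DifferentiableAt ℝ (f i) (x i)) (hmin : ∀ y, Fobj W f α x ≤ Fobj W f α y) :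
    gvec W f α x = 0 := by
  rw [← dotProduct_self_eq_zero]
  have local_min : IsLocalMin (fun t : ℝ => Fobj W f α (x + t • gvec W f α x)) 0 :=
    Filter.Eventually.of_forall fun t => by simpa using hmin _
  exact local_min.hasDerivAt_eq_zero (hasDerivAt_Fobj_line hW hf _)

/-- The first-order Taylor remainder of the gradient of `Fobj`, expanded at `x` and evaluated
at `y`, with the sign that makes
`gvec W f α x = Hmat W f α x *ᵥ (x - y) + gradRemainder f α x y + gvec W f α y`;
the quadratic part of `Fobj` does not contribute. -/
def gradRemainder (f : Fin n → ℝ → ℝ) (α : ℝ) (x y : Fin n → ℝ) : Fin n → ℝ :=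
  fun i => α * (deriv (f i) (x i) - deriv (f i) (y i) - d2 f i (x i) * (x i - y i))

theorem gvec_eq_Hmat_mulVec_sub_add (W : Matrix (Fin n) (Fin n) ℝ) (f : Fin n → ℝ → ℝ) (α : ℝ)
    (x y : Fin n → ℝ) :
    gvec W f α x = Hmat W f α x *ᵥ (x - y) + gradRemainder f α x y + gvec W f α y := by
  funext i
  simp only [gvec, Hmat, Gmat, gradRemainder, add_mulVec, smul_mulVec, mulVec_sub, Pi.add_apply,
    Pi.sub_apply, Pi.smul_apply, smul_eq_mul, mulVec_diagonal]
  ring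

theorem euclNorm_gradRemainder_le {L : ℝ} (hα : 0 ≤ α) (hL : 0 ≤ L)
    (hf : ∀ i, Differentiable ℝ (deriv (f i)))
    (hLip : ∀ i s s', |d2 f i s - d2 f i s'| ≤ L * |s - s'|) (x y : Fin n → ℝ) :
    euclNorm (gradRemainder f α x y) ≤ α * L / 2 * euclNorm (x - y) ^ 2 := by
  rw [sq, ← mul_assoc]
  refine euclNorm_le_mul_of_abs_le
    (mul_nonneg (by positivity) (euclNorm_nonneg _)) fun i => ?_
  calc |gradRemainder f α x y i|
      = α * |deriv (f i) (y i) - deriv (f i) (x i) - d2 f i (x i) * (y i - x i)| := by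
        rw [gradRemainder, abs_mul, abs_of_nonneg hα, ← abs_neg]
        ring_nf
    _ ≤ α * (L / 2 * (y i - x i) ^ 2) := by
        gcongr
        exact abs_sub_sub_le_of_deriv_lipschitz (hf i) (fun z => hLip i z (x i)) (y i)
    _ = α * L / 2 * |(x - y) i| * |(x - y) i| := by
        rw [mul_assoc _ |_|, abs_mul_abs_self, Pi.sub_apply]
        ring
    _ ≤ α * L / 2 * euclNorm (x - y) * |(x - y) i| := by
        gcongr
        exact abs_apply_le_euclNorm _ i

end FirstOrder

section Splitting

open scoped Matrix.Norms.L2Operator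

variable {n : ℕ} {W : Matrix (Fin n) (Fin n) ℝ} {f : Fin n → ℝ → ℝ} {α : ℝ} {x : Fin n → ℝ}

/-- The symmetrized splitting matrix `D(x)^{-1/2} B D(x)^{-1/2}`. It is similar to the iteration
matrix `D(x)⁻¹ B` of the splitting `H(x) = D(x) - B`, and `Ĥ(x)⁻¹` truncates the Neumann series in
its powers. -/
def splitMat (W : Matrix (Fin n) (Fin n) ℝ) (f : Fin n → ℝ → ℝ) (α : ℝ) (x : Fin n → ℝ) :
    Matrix (Fin n) (Fin n) ℝ :=
  Dinvhalf W f α x * Bmat W * Dinvhalf W f α x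

theorem Dmat_sub_Bmat (W : Matrix (Fin n) (Fin n) ℝ) (f : Fin n → ℝ → ℝ) (α : ℝ)
    (x : Fin n → ℝ) : Dmat W f α x - Bmat W = Hmat W f α x := by
  ext i j
  by_cases hij : i = j
  · subst hij
    simp only [Dmat, dEntry, Bmat, Hmat, Gmat, Matrix.sub_apply, Matrix.add_apply,
      Matrix.smul_apply, diagonal_apply_eq, one_apply_eq, smul_eq_mul]
    ring
  · simp [Dmat, Bmat, Hmat, Gmat, hij]

theorem Dhalf_mul_Dinvhalf (hd : ∀ i, 0 < dEntry W f α x i) :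
    Dhalf W f α x * Dinvhalf W f α x = 1 := by
  rw [Dhalf, Dinvhalf, diagonal_mul_diagonal, ← diagonal_one]
  congr! 2 with i
  exact mul_inv_cancel₀ (Real.sqrt_pos.2 (hd i)).ne'

theorem Dinvhalf_mul_Dhalf (hd : ∀ i, 0 < dEntry W f α x i) :
    Dinvhalf W f α x * Dhalf W f α x = 1 :=
  mul_eq_one_comm.1 (Dhalf_mul_Dinvhalf hd)

theorem Dhalf_mul_Dhalf (hd : ∀ i, 0 ≤ dEntry W f α x i) :
    Dhalf W f α x * Dhalf W f α x = Dmat W f α x := by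
  rw [Dhalf, Dmat, diagonal_mul_diagonal]
  congr! 2 with i
  exact Real.mul_self_sqrt (hd i)

theorem Dinvhalf_mul_Hmat (hd : ∀ i, 0 < dEntry W f α x i) :
    Dinvhalf W f α x * Hmat W f α x = (1 - splitMat W f α x) * Dhalf W f α x := by
  rw [← Dmat_sub_Bmat, Matrix.mul_sub, Matrix.sub_mul, ← Dhalf_mul_Dhalf fun i => (hd i).le,
    ← Matrix.mul_assoc, Dinvhalf_mul_Dhalf hd, splitMat, Matrix.mul_assoc _ _ (Dhalf W f α x),
    Dinvhalf_mul_Dhalf hd, Matrix.mul_one]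

theorem Dhalf_mul_Hhatinv (hd : ∀ i, 0 < dEntry W f α x i) :
    Dhalf W f α x * Hhatinv W f α x = (1 + splitMat W f α x) * Dinvhalf W f α x := by
  rw [Hhatinv, ← Matrix.mul_assoc, ← Matrix.mul_assoc, Dhalf_mul_Dinvhalf hd, Matrix.one_mul,
    splitMat]

theorem Dhalf_mulVec_Hhatinv_mulVec_gvec (hd : ∀ i, 0 < dEntry W f α x i) {y : Fin n → ℝ}
    (hy : gvec W f α y = 0) :
    Dhalf W f α x *ᵥ (Hhatinv W f α x *ᵥ gvec W f α x) =
      Dhalf W f α x *ᵥ (x - y)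
        - splitMat W f α x *ᵥ (splitMat W f α x *ᵥ (Dhalf W f α x *ᵥ (x - y)))
        + (1 + splitMat W f α x) *ᵥ (Dinvhalf W f α x *ᵥ gradRemainder f α x y) := by
  rw [gvec_eq_Hmat_mulVec_sub_add W f α x y, hy, add_zero, mulVec_mulVec, Dhalf_mul_Hhatinv hd,
    ← mulVec_mulVec, mulVec_add (Dinvhalf W f α x), mulVec_mulVec (x - y), Dinvhalf_mul_Hmat hd,
    mulVec_add, ← mulVec_mulVec (x - y)]
  congr 1
  simp only [add_mulVec, sub_mulVec, one_mulVec, mulVec_sub (splitMat W f α x)]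
  abel

theorem isSymm_splitMat (hW : W.IsSymm) : (splitMat W f α x).IsSymm := by
  have symm_Bmat : (Bmat W).IsSymm :=
    (isSymm_one.sub ((isSymm_diagonal _).smul 2)).add hW
  rw [Matrix.IsSymm, splitMat, transpose_mul, transpose_mul, symm_Bmat, Dinvhalf,
    diagonal_transpose, Matrix.mul_assoc]

theorem splitMat_apply (i j : Fin n) : splitMat W f α x i j =
    (√(dEntry W f α x i))⁻¹ * Bmat W i j * (√(dEntry W f α x j))⁻¹ := by
  rw [splitMat, Dinvhalf, mul_diagonal, diagonal_mul]

theorem Bmat_nonneg (hW : ∀ i j, 0 ≤ W i j) (hdiag : ∀ i, W i i ≤ 1) (i j : Fin n) :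
    0 ≤ Bmat W i j := by
  by_cases hij : i = j
  · subst hij
    simp only [Bmat, Matrix.add_apply, Matrix.sub_apply, Matrix.smul_apply, one_apply_eq,
      diagonal_apply_eq, smul_eq_mul]
    linarith [hdiag i]
  · simpa [Bmat, hij] using hW i j

theorem sum_Bmat_row (hW : W *ᵥ (fun _ => 1) = fun _ => 1) (i : Fin n) :
    ∑ j, Bmat W i j = 2 * (1 - W i i) := by
  have row_sum : ∑ j, W i j = 1 := by simpa [mulVec, dotProduct] using congrFun hW i
  simp only [Bmat, Matrix.add_apply, Matrix.sub_apply, Matrix.smul_apply, smul_eq_mul,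
    Finset.sum_add_distrib, Finset.sum_sub_distrib, one_apply, diagonal_apply, mul_ite, mul_zero,
    Finset.sum_ite_eq, Finset.mem_univ, if_true, row_sum]
  ring

theorem norm_splitMat_le (hW : W.IsSymm) (hWnonneg : ∀ i j, 0 ≤ W i j)
    (hWdiag : ∀ i, W i i ≤ 1) (hWone : W *ᵥ (fun _ => 1) = fun _ => 1)
    (hd : ∀ i, 0 < dEntry W f α x i) {ρ : ℝ} (hρ : 0 ≤ ρ)
    (hrow : ∀ i, 2 * (1 - W i i) ≤ ρ * dEntry W f α x i) : ‖splitMat W f α x‖ ≤ ρ := by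
  have sqrt_pos (i : Fin n) : 0 < √(dEntry W f α x i) := Real.sqrt_pos.2 (hd i)
  have row_bound (i : Fin n) :
      ∑ j, ‖splitMat W f α x i j‖ * √(dEntry W f α x j) ≤ ρ * √(dEntry W f α x i) :=
    calc ∑ j, ‖splitMat W f α x i j‖ * √(dEntry W f α x j)
        = (√(dEntry W f α x i))⁻¹ * (2 * (1 - W i i)) := by
          rw [← sum_Bmat_row hWone, Finset.mul_sum]
          refine Finset.sum_congr rfl fun j _ => ?_
          have entry_nonneg := Bmat_nonneg hWnonneg hWdiag i j
          rw [splitMat_apply, Real.norm_of_nonneg (by positivity),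
            inv_mul_cancel_right₀ (sqrt_pos j).ne']
      _ ≤ ρ * √(dEntry W f α x i) := by
          rw [inv_mul_le_iff₀ (sqrt_pos i), mul_left_comm, Real.mul_self_sqrt (hd i).le]
          exact hrow i
  have col_bound (j : Fin n) :
      ∑ i, ‖splitMat W f α x i j‖ * √(dEntry W f α x i) ≤ ρ * √(dEntry W f α x j) := by
    simpa only [(isSymm_splitMat hW).apply] using row_bound j
  simpa only [Real.sqrt_mul_self hρ] using
    l2_opNorm_le_of_schur_test (splitMat W f α x) sqrt_pos hρ row_bound col_bound

theorem norm_Dinvhalf_le {d : ℝ} (hd : 0 < d) (hdx : ∀ i, d ≤ dEntry W f α x i) :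
    ‖Dinvhalf W f α x‖ ≤ (√d)⁻¹ := by
  rw [Dinvhalf, l2_opNorm_diagonal, pi_norm_le_iff_of_nonneg (by positivity)]
  intro i
  rw [Real.norm_of_nonneg (by positivity)]
  gcongr
  exact hdx i

theorem norm_one_add_splitMat_mul_Dinvhalf_le {d ρ : ℝ} (hd : 0 < d)
    (hdx : ∀ i, d ≤ dEntry W f α x i) (hS : ‖splitMat W f α x‖ ≤ ρ) :
    ‖(1 + splitMat W f α x) * Dinvhalf W f α x‖ ≤ (1 + ρ) * (√d)⁻¹ := by
  rw [Matrix.add_mul, Matrix.one_mul, add_mul, one_mul]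
  have inv_bound := norm_Dinvhalf_le hd hdx
  refine (norm_add_le _ _).trans (add_le_add inv_bound ((norm_mul_le _ _).trans ?_))
  exact mul_le_mul hS inv_bound (norm_nonneg _) ((norm_nonneg _).trans hS)

theorem norm_Hhatinv_le {d ρ : ℝ} (hd : 0 < d) (hdx : ∀ i, d ≤ dEntry W f α x i)
    (hS : ‖splitMat W f α x‖ ≤ ρ) : ‖Hhatinv W f α x‖ ≤ (1 + ρ) / d :=
  calc ‖Hhatinv W f α x‖
      ≤ ‖Dinvhalf W f α x‖ * ‖(1 + splitMat W f α x) * Dinvhalf W f α x‖ := by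
        rw [Hhatinv, Matrix.mul_assoc]
        exact norm_mul_le _ _
    _ ≤ (√d)⁻¹ * ((1 + ρ) * (√d)⁻¹) :=
        mul_le_mul (norm_Dinvhalf_le hd hdx) (norm_one_add_splitMat_mul_Dinvhalf_le hd hdx hS)
          (norm_nonneg _) (by positivity)
    _ = (1 + ρ) / d := by
        rw [mul_left_comm, ← mul_inv, Real.mul_self_sqrt hd.le, div_eq_mul_inv]

theorem euclNorm_le_inv_sqrt_mul_euclNorm_Dhalf {d : ℝ} (hd : 0 < d)
    (hdx : ∀ i, d ≤ dEntry W f α x i) (v : Fin n → ℝ) :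
    euclNorm v ≤ (√d)⁻¹ * euclNorm (Dhalf W f α x *ᵥ v) :=
  calc euclNorm v = euclNorm (Dinvhalf W f α x *ᵥ (Dhalf W f α x *ᵥ v)) := by
        rw [mulVec_mulVec, Dinvhalf_mul_Dhalf fun i => hd.trans_le (hdx i), one_mulVec]
    _ ≤ ‖Dinvhalf W f α x‖ * euclNorm (Dhalf W f α x *ᵥ v) := euclNorm_mulVec_le _ _
    _ ≤ (√d)⁻¹ * euclNorm (Dhalf W f α x *ᵥ v) :=
        mul_le_mul_of_nonneg_right (norm_Dinvhalf_le hd hdx) (euclNorm_nonneg _)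

theorem euclNorm_Dhalf_mulVec_le_mul {c : ℝ} (hc : 0 ≤ c) {x' : Fin n → ℝ}
    (h : ∀ i, dEntry W f α x i ≤ c ^ 2 * dEntry W f α x' i) (v : Fin n → ℝ) :
    euclNorm (Dhalf W f α x *ᵥ v) ≤ c * euclNorm (Dhalf W f α x' *ᵥ v) := by
  refine euclNorm_le_mul_of_abs_le hc fun i => ?_
  simp only [Dhalf, mulVec_diagonal, abs_mul, abs_of_nonneg (Real.sqrt_nonneg _)]
  rw [← mul_assoc, ← Real.sqrt_sq hc, ← Real.sqrt_mul (sq_nonneg c)]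
  exact mul_le_mul_of_nonneg_right (Real.sqrt_le_sqrt (h i)) (abs_nonneg _)

theorem le_dEntry {Δ m : ℝ} {i : Fin n} (hα : 0 ≤ α) (hW : W i i ≤ Δ) (hf : m ≤ d2 f i (x i)) :
    2 * (1 - Δ) + α * m ≤ dEntry W f α x i := by
  rw [dEntry]
  linarith [mul_le_mul_of_nonneg_left hf hα]

theorem dEntry_le {δ M : ℝ} {i : Fin n} (hα : 0 ≤ α) (hW : δ ≤ W i i) (hf : d2 f i (x i) ≤ M) :
    dEntry W f α x i ≤ 2 * (1 - δ) + α * M := by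
  rw [dEntry]
  linarith [mul_le_mul_of_nonneg_left hf hα]

theorem two_mul_one_sub_le_mul_dEntry {δ m : ℝ} {i : Fin n} (hδ : δ < 1) (hα : 0 ≤ α)
    (hm : 0 ≤ m) (hW : δ ≤ W i i) (hf : m ≤ d2 f i (x i)) :
    2 * (1 - W i i) ≤ 2 * (1 - δ) / (2 * (1 - δ) + α * m) * dEntry W f α x i := by
  have one_sub_pos : 0 < 1 - δ := sub_pos.2 hδ
  have curvature : α * m ≤ α * d2 f i (x i) := mul_le_mul_of_nonneg_left hf hα
  rw [div_mul_eq_mul_div, le_div_iff₀ (by positivity), dEntry]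
  nlinarith [mul_le_mul_of_nonneg_left hW (mul_nonneg hα hm),
    mul_le_mul_of_nonneg_left curvature one_sub_pos.le]

end Splitting

section AsyncUpdate

open scoped Matrix.Norms.L2Operator

variable {n : ℕ} {W : Matrix (Fin n) (Fin n) ℝ} {f : Fin n → ℝ → ℝ} {α ε pmin : ℝ}
  {p : Fin n → ℝ} {x : Fin n → ℝ}

theorem Dhalf_mulVec_upd_sub (y : Fin n → ℝ) (i : Fin n) :
    Dhalf W f α x *ᵥ (upd W f α p ε x i - y) =
      Dhalf W f α x *ᵥ (x - y) -
        Pi.single i (ε / p i * (Dhalf W f α x *ᵥ (Hhatinv W f α x *ᵥ gvec W f α x)) i) := by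
  funext k
  by_cases hk : k = i
  · subst hk
    simp only [Dhalf, mulVec_diagonal, Pi.sub_apply, upd, Function.update_self, Pi.single_eq_same]
    ring
  · simp [Dhalf, mulVec_diagonal, upd, hk]

theorem sum_mul_euclNorm_Dhalf_upd_sub_le (hW : W.IsSymm) (hd : ∀ i, 0 < dEntry W f α x i)
    {ρ : ℝ} (hS : ‖splitMat W f α x‖ ≤ ρ) (hpmin : 0 < pmin) (hp : ∀ i, pmin ≤ p i)
    (hpsum : ∑ i, p i = 1) (hε : 0 ≤ ε) {y : Fin n → ℝ} (hy : gvec W f α y = 0) :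
    ∑ i, p i * euclNorm (Dhalf W f α x *ᵥ (upd W f α p ε x i - y)) ≤
      √(1 + ε * max (ε / pmin - 2) (ε * (1 - ρ ^ 2) ^ 2 / pmin - 2 * (1 - ρ ^ 2))) *
          euclNorm (Dhalf W f α x *ᵥ (x - y)) +
        ε / pmin *
          euclNorm ((1 + splitMat W f α x) *ᵥ (Dinvhalf W f α x *ᵥ gradRemainder f α x y)) := by
  have symmetric : (toEuclideanLin (splitMat W f α x)).IsSymmetric :=
    isSymmetric_toEuclideanLin_iff.2 (isSymm_splitMat hW)
  have bounded (v : EuclideanSpace ℝ (Fin n)) :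
      ‖toEuclideanLin (splitMat W f α x) v‖ ≤ ρ * ‖v‖ :=
    (l2_opNorm_mulVec _ v).trans (mul_le_mul_of_nonneg_right hS (norm_nonneg v))
  simp only [Dhalf_mulVec_upd_sub, Dhalf_mulVec_Hhatinv_mulVec_gvec hd hy, euclNorm_eq_norm]
  generalize Dhalf W f α x *ᵥ (x - y) = u
  generalize (1 + splitMat W f α x) *ᵥ (Dinvhalf W f α x *ᵥ gradRemainder f α x y) = w
  exact sum_mul_norm_sub_single_add_le symmetric bounded hpmin hp hpsum hε
    (WithLp.toLp 2 u) (WithLp.toLp 2 w)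

theorem euclNorm_one_add_splitMat_mulVec_gradRemainder_le {d ρ L : ℝ} (hd : 0 < d)
    (hdx : ∀ i, d ≤ dEntry W f α x i) (hS : ‖splitMat W f α x‖ ≤ ρ) (hα : 0 ≤ α) (hL : 0 ≤ L)
    (hf : ∀ i, Differentiable ℝ (deriv (f i)))
    (hLip : ∀ i s s', |d2 f i s - d2 f i s'| ≤ L * |s - s'|) (y : Fin n → ℝ) :
    euclNorm ((1 + splitMat W f α x) *ᵥ (Dinvhalf W f α x *ᵥ gradRemainder f α x y)) ≤
      (1 + ρ) * (√d)⁻¹ * (α * L / 2 * euclNorm (x - y) ^ 2) := by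
  have op_bound := norm_one_add_splitMat_mul_Dinvhalf_le hd hdx hS
  rw [mulVec_mulVec]
  exact (euclNorm_mulVec_le _ _).trans (mul_le_mul op_bound
    (euclNorm_gradRemainder_le hα hL hf hLip x y) (euclNorm_nonneg _)
    ((norm_nonneg _).trans op_bound))

theorem abs_upd_sub_le (hpmin : 0 < pmin) (hp : ∀ i, pmin ≤ p i) (hε : 0 ≤ ε) (i j : Fin n) :
    |upd W f α p ε x j i - x i| ≤ ε / pmin * euclNorm (Hhatinv W f α x *ᵥ gvec W f α x) := by
  have dir_nonneg := euclNorm_nonneg (Hhatinv W f α x *ᵥ gvec W f α x)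
  by_cases hij : i = j
  · subst hij
    rw [upd, Function.update_self, sub_sub_cancel_left, abs_neg, abs_mul,
      abs_of_nonneg (div_nonneg hε (hpmin.le.trans (hp i)))]
    gcongr
    exacts [hp i, abs_apply_le_euclNorm _ i]
  · rw [upd, Function.update_of_ne hij, sub_self, abs_zero]
    positivity

theorem dEntry_upd_le {d L : ℝ} (hd : 0 < d) (hdx : ∀ i, d ≤ dEntry W f α x i) (hα : 0 ≤ α)
    (hL : 0 ≤ L) (hLip : ∀ i s s', |d2 f i s - d2 f i s'| ≤ L * |s - s'|) (hpmin : 0 < pmin)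
    (hp : ∀ i, pmin ≤ p i) (hε : 0 ≤ ε) (i j : Fin n) :
    dEntry W f α (upd W f α p ε x j) i ≤
      (1 + ε * α * L / (pmin * d) * euclNorm (Hhatinv W f α x *ᵥ gvec W f α x)) *
        dEntry W f α x i := by
  set s := euclNorm (Hhatinv W f α x *ᵥ gvec W f α x)
  have s_nonneg : 0 ≤ s := euclNorm_nonneg _
  calc dEntry W f α (upd W f α p ε x j) i
      = α * (d2 f i (upd W f α p ε x j i) - d2 f i (x i)) + dEntry W f α x i := by
        simp only [dEntry]
        ring
    _ ≤ α * (L * (ε / pmin * s)) + dEntry W f α x i := by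
        gcongr
        exact ((le_abs_self _).trans (hLip i _ _)).trans
          (mul_le_mul_of_nonneg_left (abs_upd_sub_le hpmin hp hε i j) hL)
    _ = ε * α * L / (pmin * d) * s * d + dEntry W f α x i := by field_simp
    _ ≤ ε * α * L / (pmin * d) * s * dEntry W f α x i + dEntry W f α x i := by
        gcongr
        exact hdx i
    _ = (1 + ε * α * L / (pmin * d) * s) * dEntry W f α x i := by ring

theorem euclNorm_Dhalf_upd_mulVec_le {d L : ℝ} (hd : 0 < d) (hdx : ∀ i, d ≤ dEntry W f α x i)
    (hα : 0 ≤ α) (hL : 0 ≤ L) (hLip : ∀ i s s', |d2 f i s - d2 f i s'| ≤ L * |s - s'|)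
    (hpmin : 0 < pmin) (hp : ∀ i, pmin ≤ p i) (hε : 0 ≤ ε) (j : Fin n) (v : Fin n → ℝ) :
    euclNorm (Dhalf W f α (upd W f α p ε x j) *ᵥ v) ≤
      (1 + √(ε * α * L / (pmin * d) * euclNorm (Hhatinv W f α x *ᵥ gvec W f α x))) *
        euclNorm (Dhalf W f α x *ᵥ v) := by
  set a := ε * α * L / (pmin * d) * euclNorm (Hhatinv W f α x *ᵥ gvec W f α x)
  have a_nonneg : 0 ≤ a := mul_nonneg (by positivity) (euclNorm_nonneg _)
  refine euclNorm_Dhalf_mulVec_le_mul (by positivity) (fun i => ?_) v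
  refine (dEntry_upd_le hd hdx hα hL hLip hpmin hp hε i j).trans
    (mul_le_mul_of_nonneg_right ?_ (hd.le.trans (hdx i)))
  calc 1 + a = 1 + √a ^ 2 := by rw [Real.sq_sqrt a_nonneg]
    _ ≤ (1 + √a) ^ 2 := by linarith [Real.sqrt_nonneg a, add_sq 1 √a]

theorem euclNorm_Dhalf_upd_mulVec_le_sqrt_euclNorm_gvec {d ρ L : ℝ} (hd : 0 < d)
    (hdx : ∀ i, d ≤ dEntry W f α x i) (hS : ‖splitMat W f α x‖ ≤ ρ) (hα : 0 ≤ α) (hL : 0 ≤ L)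
    (hLip : ∀ i s s', |d2 f i s - d2 f i s'| ≤ L * |s - s'|) (hpmin : 0 < pmin)
    (hp : ∀ i, pmin ≤ p i) (hε : 0 ≤ ε) (j : Fin n) (v : Fin n → ℝ) :
    euclNorm (Dhalf W f α (upd W f α p ε x j) *ᵥ v) ≤
      (1 + √(ε * α * L * ((1 + ρ) / d) / (pmin * d)) * √(euclNorm (gvec W f α x))) *
        euclNorm (Dhalf W f α x *ᵥ v) := by
  have g_nonneg := euclNorm_nonneg (gvec W f α x)
  have dir_le : euclNorm (Hhatinv W f α x *ᵥ gvec W f α x) ≤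
      (1 + ρ) / d * euclNorm (gvec W f α x) :=
    (euclNorm_mulVec_le _ _).trans
      (mul_le_mul_of_nonneg_right (norm_Hhatinv_le hd hdx hS) g_nonneg)
  refine (euclNorm_Dhalf_upd_mulVec_le hd hdx hα hL hLip hpmin hp hε j v).trans
    (mul_le_mul_of_nonneg_right ?_ (euclNorm_nonneg _))
  rw [← Real.sqrt_mul' _ g_nonneg]
  gcongr 1 + √?_
  exact (mul_le_mul_of_nonneg_left dir_le (by positivity)).trans_eq (by ring)

theorem div_mul_euclNorm_one_add_splitMat_mulVec_gradRemainder_le {d ρ L T : ℝ} (hd : 0 < d)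
    (hdT : d ≤ T) (hdx : ∀ z i, d ≤ dEntry W f α z i) (hS : ‖splitMat W f α x‖ ≤ ρ)
    (hα : 0 ≤ α) (hL : 0 ≤ L) (hf : ∀ i, Differentiable ℝ (deriv (f i)))
    (hLip : ∀ i s s', |d2 f i s - d2 f i s'| ≤ L * |s - s'|) (hpmin : 0 < pmin) (hε : 0 ≤ ε)
    (z y : Fin n → ℝ) :
    ε / pmin * euclNorm ((1 + splitMat W f α x) *ᵥ (Dinvhalf W f α x *ᵥ gradRemainder f α x y)) ≤
      √T * α * L * ε * ((1 + ρ) / d) / (2 * pmin * d) *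
        euclNorm (Dhalf W f α z *ᵥ (x - y)) ^ 2 := by
  set N := euclNorm (Dhalf W f α z *ᵥ (x - y))
  have hρ : 0 ≤ ρ := (norm_nonneg _).trans hS
  have inv_sqrt_le : (√d)⁻¹ ≤ √T / d := by
    rw [← Real.sqrt_div_self]
    gcongr
  have error_le : euclNorm (x - y) ^ 2 ≤ ((√d)⁻¹ * N) ^ 2 :=
    pow_le_pow_left₀ (euclNorm_nonneg _)
      (euclNorm_le_inv_sqrt_mul_euclNorm_Dhalf hd (hdx z) _) 2
  calc _ ≤ ε / pmin * ((1 + ρ) * (√d)⁻¹ * (α * L / 2 * euclNorm (x - y) ^ 2)) := by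
        gcongr
        exact euclNorm_one_add_splitMat_mulVec_gradRemainder_le hd (hdx x) hS hα hL hf hLip y
    _ ≤ ε / pmin * ((1 + ρ) * (√T / d) * (α * L / 2 * ((√d)⁻¹ * N) ^ 2)) := by gcongr
    _ = _ := by
        rw [mul_pow, inv_pow, Real.sq_sqrt hd.le]
        field_simp

end AsyncUpdate

open scoped Matrix.Norms.L2Operator in
theorem stmt17_general {n : ℕ} {W : Matrix (Fin n) (Fin n) ℝ} (hWsymm : W.IsSymm)
    (hWnonneg : ∀ i j, 0 ≤ W i j) (hWone : W *ᵥ (fun _ => 1) = fun _ => 1)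
    {δ Δ : ℝ} (hΔ : Δ < 1) (hWdiag : ∀ i, δ ≤ W i i ∧ W i i ≤ Δ)
    {f : Fin n → ℝ → ℝ} (hf : ∀ i, ContDiff ℝ 2 (f i))
    {m M : ℝ} (hm : 0 ≤ m) (hd2 : ∀ i s, m ≤ d2 f i s ∧ d2 f i s ≤ M)
    {α : ℝ} (hα : 0 ≤ α) {p : Fin n → ℝ} {pmin : ℝ} (hpmin : 0 < pmin) (hp : ∀ i, pmin ≤ p i)
    (hpsum : ∑ i, p i = 1)
    {L : ℝ} (hLip : ∀ i s s', |d2 f i s - d2 f i s'| ≤ L * |s - s'|)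
    {xstar : Fin n → ℝ} (hmin : ∀ y, Fobj W f α xstar ≤ Fobj W f α y)
    {ρ Lam : ℝ} (hρ : ρ = 2 * (1 - δ) / (2 * (1 - δ) + α * m))
    (hLam : Lam = (1 + ρ) / (2 * (1 - Δ) + α * m)) {ε : ℝ} (hε : 0 ≤ ε)
    {C1 : ℝ} (hC1 : C1 =
      √(1 + ε * max (ε / pmin - 2) (ε * (1 - ρ ^ 2) ^ 2 / pmin - 2 * (1 - ρ ^ 2))))
    {C2 : ℝ} (hC2 : C2 = √(ε * α * L * Lam / (pmin * (2 * (1 - Δ) + α * m))))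
    (xbar : Fin n → ℝ) (j : Fin n) :
    ∑ i, p i * euclNorm (Dhalf W f α (upd W f α p ε xbar j) *ᵥ
        (upd W f α p ε (upd W f α p ε xbar j) i - xstar)) ≤
      √(2 * (1 - δ) + α * M) * α * L * ε * Lam / (2 * pmin * (2 * (1 - Δ) + α * m)) *
          euclNorm (Dhalf W f α xbar *ᵥ (upd W f α p ε xbar j - xstar)) ^ 2 +
        C1 * (1 + C2 * √(euclNorm (gvec W f α xbar))) *
          euclNorm (Dhalf W f α xbar *ᵥ (upd W f α p ε xbar j - xstar)) := by
  have hδ : δ < 1 := (hWdiag j).1.trans_lt ((hWdiag j).2.trans_lt hΔ)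
  have hρ0 : 0 ≤ ρ := by
    have two_mul_nonneg : 0 ≤ 2 * (1 - δ) := by linarith
    exact hρ ▸ div_nonneg two_mul_nonneg (add_nonneg two_mul_nonneg (mul_nonneg hα hm))
  have hL : 0 ≤ L := by simpa using (abs_nonneg _).trans (hLip j 1 0)
  have hd : 0 < 2 * (1 - Δ) + α * m :=
    add_pos_of_pos_of_nonneg (by linarith) (mul_nonneg hα hm)
  have hdx (y : Fin n → ℝ) (i : Fin n) : 2 * (1 - Δ) + α * m ≤ dEntry W f α y i :=
    le_dEntry hα (hWdiag i).2 (hd2 i _).1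
  have hdT := (hdx 0 j).trans (dEntry_le hα (hWdiag j).1 (hd2 j _).2)
  have hS (y : Fin n → ℝ) : ‖splitMat W f α y‖ ≤ ρ :=
    norm_splitMat_le hWsymm hWnonneg (fun i => (hWdiag i).2.trans hΔ.le) hWone
      (fun i => hd.trans_le (hdx y i)) hρ0
      fun i => hρ ▸ two_mul_one_sub_le_mul_dEntry hδ hα hm (hWdiag i).1 (hd2 i _).1
  have gvec_xstar : gvec W f α xstar = 0 := gvec_eq_zero_of_forall_Fobj_le hWsymm
    (fun i => (hf i).differentiable two_ne_zero _) hmin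
  subst hC1 hC2 hLam
  refine (sum_mul_euclNorm_Dhalf_upd_sub_le hWsymm (fun i => hd.trans_le (hdx _ i)) (hS _) hpmin
    hp hpsum hε gvec_xstar).trans ?_
  rw [add_comm, mul_assoc √(1 + _)]
  refine add_le_add ?_ (mul_le_mul_of_nonneg_left ?_ (Real.sqrt_nonneg _))
  · exact div_mul_euclNorm_one_add_splitMat_mulVec_gradRemainder_le hd hdT hdx (hS _) hα hL
      (fun i => ((contDiff_succ_iff_deriv (n := 1)).1 (hf i)).2.2.differentiable one_ne_zero)
      hLip hpmin hε _ _
  · exact euclNorm_Dhalf_upd_mulVec_le_sqrt_euclNorm_gvec hd (hdx xbar) (hS xbar) hα hL hLip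
      hpmin hp hε j _

/-- Expected linear–quadratic recursion for the weighted error: with `x = x̄^(j)`,
`Σᵢ pᵢ‖D(x)^{1/2}(x^(i) − x*)‖ ≤ Γ₁‖D(x̄)^{1/2}(x − x*)‖² + C₁(1 + C₂‖g(x̄)‖^{1/2})‖D(x̄)^{1/2}(x − x*)‖`. -/
theorem stmt17 (n : ℕ) (hn : 1 ≤ n)
    (W : Matrix (Fin n) (Fin n) ℝ) (hWsymm : W.IsSymm)
    (hWnonneg : ∀ i j, 0 ≤ W i j) (hWlt : ∀ i j, W i j < 1)
    (hWone : W.mulVec (fun _ => 1) = fun _ => 1)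
    (hWnull : ∀ x : Fin n → ℝ, ((1 - W).mulVec x = 0 ↔ ∃ c : ℝ, x = fun _ => c))
    (δ Δ : ℝ) (hδ : 0 < δ) (hδΔ : δ ≤ Δ) (hΔ : Δ < 1)
    (hWdiag : ∀ i, δ ≤ W i i ∧ W i i ≤ Δ)
    (f : Fin n → ℝ → ℝ) (hf : ∀ i, ContDiff ℝ 2 (f i))
    (hconv : ∀ i, ConvexOn ℝ Set.univ (f i))
    (m M : ℝ) (hm : 0 < m) (hmM : m ≤ M)
    (hd2 : ∀ i s, m ≤ d2 f i s ∧ d2 f i s ≤ M)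
    (α : ℝ) (hα : 0 < α)
    (p : Fin n → ℝ) (pmin pmax : ℝ) (hpmin : 0 < pmin) (hpmax : pmax < 1)
    (hp : ∀ i, pmin ≤ p i ∧ p i ≤ pmax) (hpsum : ∑ i, p i = 1)
    (L : ℝ) (hLip : ∀ i s s', |d2 f i s - d2 f i s'| ≤ L * |s - s'|)
    (xstar : Fin n → ℝ) (hmin : ∀ y, Fobj W f α xstar ≤ Fobj W f α y)
    (ρ lam Lam : ℝ) (hρ : ρ = 2 * (1 - δ) / (2 * (1 - δ) + α * m))
    (hlam : lam = 1 / (2 * (1 - δ) + α * M))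
    (hLam : Lam = (1 + ρ) / (2 * (1 - Δ) + α * m))
    (ε : ℝ) (hε : 0 < ε) (hεlt : ε < min (1 / 2) (2 * pmin * (lam / Lam) ^ 2))
    (C1 : ℝ)
    (hC1 : C1 = Real.sqrt
      (1 + ε * max (ε / pmin - 2) (ε * (1 - ρ ^ 2) ^ 2 / pmin - 2 * (1 - ρ ^ 2))))
    (C2 : ℝ) (hC2 : C2 = Real.sqrt (ε * α * L * Lam / (pmin * (2 * (1 - Δ) + α * m)))) :
    ∀ (xbar : Fin n → ℝ) (j : Fin n),
      ∑ i, p i *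
          euclNorm ((Dhalf W f α (upd W f α p ε xbar j)).mulVec
            (upd W f α p ε (upd W f α p ε xbar j) i - xstar)) ≤
        (Real.sqrt (2 * (1 - δ) + α * M) * α * L * ε * Lam /
            (2 * pmin * (2 * (1 - Δ) + α * m))) *
          euclNorm ((Dhalf W f α xbar).mulVec (upd W f α p ε xbar j - xstar)) ^ 2 +
        C1 * (1 + C2 * Real.sqrt (euclNorm (gvec W f α xbar))) *
          euclNorm ((Dhalf W f α xbar).mulVec (upd W f α p ε xbar j - xstar)) := by
  exact stmt17_general hWsymm hWnonneg hWone hΔ hWdiag hf hm.le hd2 hα.le hpmin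
    (fun i => (hp i).1) hpsum hLip hmin hρ hLam hε.le hC1 hC2
end
end

section
/- Let (a_r) be a sequence of nonnegative reals, Γ₁ > 0, θ > 0, Γ : ℕ → ℝ nonnegative, and T ≤ T + l natural numbers. Suppose that a_T < θ/(θΓ₁ + 1), and that for every r with T ≤ r < T + l one has a_{r+1} ≤ Γ₁ a_r² + Γ(r) a_r and θ Γ(r) ≤ a_r. Then for every r with T ≤ r ≤ T + l: a_r ≤ (θ/(θΓ₁ + 1)) · (((θΓ₁ + 1)/θ) · a_T)^{2^{r − T}}; in particular the sequence decreases at a quadratic rate on this interval. -/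
/-!
The lower bound `θ * Γ r ≤ a r` lets the linear term be absorbed into the quadratic one, giving
`a (r + 1) ≤ c * a r ^ 2` with `c = (θ * Γ₁ + 1) / θ`. Rescaling to `y r = c * a r` removes the
constant: `y (r + 1) ≤ y r ^ 2`, so each step squares the bound and `y r ≤ y T ^ 2 ^ (r - T)`.
-/

theorem le_pow_pow_of_succ_le_pow {M : Type*} [MonoidWithZero M] [Preorder M] [PosMulMono M]
    [MulPosMono M] {y : ℕ → M} {p m n : ℕ} (hmn : m ≤ n)
    (hy : ∀ k ∈ Set.Ico m n, 0 ≤ y k) (hsucc : ∀ k ∈ Set.Ico m n, y (k + 1) ≤ y k ^ p) :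
    y n ≤ y m ^ p ^ (n - m) := by
  induction n, hmn using Nat.le_induction with
  | base => simp
  | succ n hmn ih =>
    have hn : n ∈ Set.Ico m (n + 1) := ⟨hmn, n.lt_succ_self⟩
    have hsub : Set.Ico m n ⊆ Set.Ico m (n + 1) := Set.Ico_subset_Ico_right n.le_succ
    have hyn : y n ≤ y m ^ p ^ (n - m) :=
      ih (fun k hk ↦ hy k (hsub hk)) fun k hk ↦ hsucc k (hsub hk)
    calc y (n + 1) ≤ y n ^ p := hsucc n hn
      _ ≤ (y m ^ p ^ (n - m)) ^ p := pow_le_pow_left₀ (hy n hn) hyn p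
      _ = y m ^ p ^ (n + 1 - m) := by rw [← pow_mul, ← pow_succ, Nat.sub_add_comm hmn]

section OrderedField

variable {K : Type*} [Field K] [LinearOrder K] [IsStrictOrderedRing K]

theorem le_inv_mul_pow_two_pow_of_succ_le_mul_sq {a : ℕ → K} {c : K} {m n : ℕ} (hc : 0 < c)
    (hmn : m ≤ n) (ha : ∀ k ∈ Set.Ico m n, 0 ≤ a k)
    (hsucc : ∀ k ∈ Set.Ico m n, a (k + 1) ≤ c * a k ^ 2) :
    a n ≤ c⁻¹ * (c * a m) ^ 2 ^ (n - m) := by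
  rw [le_inv_mul_iff₀ hc]
  refine le_pow_pow_of_succ_le_pow (y := fun k ↦ c * a k) hmn
    (fun k hk ↦ mul_nonneg hc.le (ha k hk)) fun k hk ↦ ?_
  calc c * a (k + 1) ≤ c * (c * a k ^ 2) := mul_le_mul_of_nonneg_left (hsucc k hk) hc.le
    _ = (c * a k) ^ 2 := by ring

theorem mul_sq_add_mul_le_div_mul_sq {x A γ θ : K} (hθ : 0 < θ) (hx : 0 ≤ x) (hγ : θ * γ ≤ x) :
    A * x ^ 2 + γ * x ≤ (θ * A + 1) / θ * x ^ 2 :=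
  calc A * x ^ 2 + γ * x ≤ A * x ^ 2 + x / θ * x := by
        gcongr
        rwa [le_div_iff₀' hθ]
    _ = (θ * A + 1) / θ * x ^ 2 := by field_simp

theorem stmt19_general {a Γ : ℕ → K} {Γ₁ θ : K} {m n : ℕ} (hθ : 0 < θ) (hc : 0 < θ * Γ₁ + 1)
    (hmn : m ≤ n) (ha : ∀ k ∈ Set.Ico m n, 0 ≤ a k)
    (hrec : ∀ k ∈ Set.Ico m n, a (k + 1) ≤ Γ₁ * a k ^ 2 + Γ k * a k)
    (hlow : ∀ k ∈ Set.Ico m n, θ * Γ k ≤ a k) :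
    a n ≤ θ / (θ * Γ₁ + 1) * ((θ * Γ₁ + 1) / θ * a m) ^ 2 ^ (n - m) := by
  rw [← inv_div]
  exact le_inv_mul_pow_two_pow_of_succ_le_mul_sq (div_pos hc hθ) hmn ha fun k hk ↦
    (hrec k hk).trans (mul_sq_add_mul_le_div_mul_sq hθ (ha k hk) (hlow k hk))

end OrderedField

/-- Quadratic-rate recursion: if `a_T < θ/(θΓ₁+1)` and on `[T, T+l)` one has
`a_{r+1} ≤ Γ₁ a_r² + Γ(r) a_r` with `θΓ(r) ≤ a_r`, then for `T ≤ r ≤ T + l`,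
`a_r ≤ (θ/(θΓ₁+1)) · (((θΓ₁+1)/θ) a_T)^{2^{r−T}}`. -/
theorem stmt19 (a : ℕ → ℝ) (ha : ∀ r, 0 ≤ a r)
    (Γ₁ θ : ℝ) (hΓ₁ : 0 < Γ₁) (hθ : 0 < θ)
    (Γ : ℕ → ℝ) (hΓ : ∀ r, 0 ≤ Γ r)
    (T l : ℕ)
    (hstart : a T < θ / (θ * Γ₁ + 1))
    (hrec : ∀ r, T ≤ r → r < T + l → a (r + 1) ≤ Γ₁ * a r ^ 2 + Γ r * a r)
    (hlow : ∀ r, T ≤ r → r < T + l → θ * Γ r ≤ a r) :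
    ∀ r, T ≤ r → r ≤ T + l →
      a r ≤ (θ / (θ * Γ₁ + 1)) * (((θ * Γ₁ + 1) / θ) * a T) ^ (2 ^ (r - T)) := by
  intro r hTr hr
  exact stmt19_general hθ (by positivity) hTr (fun k _ ↦ ha k)
    (fun k hk ↦ hrec k hk.1 (hk.2.trans_le hr)) fun k hk ↦ hlow k hk.1 (hk.2.trans_le hr)
end
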